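/- In a finite Markov decision process, if an initial distribution d0 is not almost-sure winning for the reachability objective ◇T, then for all strategies σ and all steps i ≥ 0, the probability of being in T at step i is at most 1 − α0·α^n, where n is the number of states, α is the smallest positive transition probability, and α0 is the smallest positive probability in d0. -/

import Mathlib

open scoped BigOperators
open Classical Filter

/-- A finite Markov decision process with real transition probabilities. -/
structure MDP (Q A : Type) [Fintype Q] [Fintype A] where
  δ : Q → A → Q → ℝ
  δ_nonneg : ∀ q a q', 0 ≤ δ q a q'
  δ_sum : ∀ q a, ∑ q', δ q a q' = 1

namespace MDP

variable {Q A : Type} [Fintype Q] [Fintype A]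

/-- `d` is a probability distribution. -/
def IsDist (d : Q → ℝ) : Prop := (∀ q, 0 ≤ d q) ∧ ∑ q, d q = 1

/-- A (randomized, history-dependent) strategy maps a history (list of past
state-action pairs) and the current state to a distribution over actions. -/
def IsStrategy (σ : List (Q × A) → Q → A → ℝ) : Prop :=
  (∀ h q a, 0 ≤ σ h q a) ∧ ∀ h q, ∑ a, σ h q a = 1

/-- The probability of the finite path `qs` (with actions `as`) of length `i`,
under strategy `σ` from initial distribution `d0`. -/
noncomputable def pathProb (M : MDP Q A) (σ : List (Q × A) → Q → A → ℝ)
    (d0 : Q → ℝ) (i : ℕ) (qs : Fin (i + 1) → Q) (as : Fin i → A) : ℝ :=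
  d0 (qs 0) * ∏ j : Fin i,
    (σ (List.ofFn (fun k : Fin j.val =>
          (qs ⟨k.val, by have := k.isLt; have := j.isLt; omega⟩,
           as ⟨k.val, by have := k.isLt; have := j.isLt; omega⟩)))
        (qs j.castSucc) (as j))
      * M.δ (qs j.castSucc) (as j) (qs j.succ)

/-- The distribution over states after `i` steps (`M^σ_i`). -/
noncomputable def stepDist (M : MDP Q A) (σ : List (Q × A) → Q → A → ℝ)
    (d0 : Q → ℝ) (i : ℕ) (q : Q) : ℝ :=
  ∑ qs : Fin (i + 1) → Q, ∑ as : Fin i → A,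
    if qs (Fin.last i) = q then M.pathProb σ d0 i qs as else 0

/-- The probability mass that a (sub)distribution assigns to a set `T`. -/
noncomputable def mass (d : Q → ℝ) (T : Set Q) : ℝ := ∑ q, T.indicator d q

/-- The support of a (sub)distribution. -/
def supp {α : Type} (d : α → ℝ) : Set α := {q | 0 < d q}

/-- One-step sure predecessors of `Y`. -/
def Pre (M : MDP Q A) (Y : Set Q) : Set Q :=
  {q | ∃ a, ∀ q', 0 < M.δ q a q' → q' ∈ Y}

/-- Probability of reaching `T` within `i` steps. -/
noncomputable def reachProb (M : MDP Q A) (σ : List (Q × A) → Q → A → ℝ)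
    (d0 : Q → ℝ) (T : Set Q) (i : ℕ) : ℝ :=
  ∑ qs : Fin (i + 1) → Q, ∑ as : Fin i → A,
    if ∃ j, qs j ∈ T then M.pathProb σ d0 i qs as else 0

/-- `d0` is almost-sure winning for the reachability objective `◇T`:
some strategy reaches `T` with probability one. -/
def ASReach (M : MDP Q A) (d0 : Q → ℝ) (T : Set Q) : Prop :=
  ∃ σ, IsStrategy σ ∧ (⨆ i : ℕ, M.reachProb σ d0 T i) = 1

/-- `d0` is limit-sure eventually synchronizing in `T`. -/
def LimitSureEventually (M : MDP Q A) (d0 : Q → ℝ) (T : Set Q) : Prop :=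
  ∀ ε > (0 : ℝ), ∃ σ, IsStrategy σ ∧ ∃ i, 1 - ε ≤ mass (M.stepDist σ d0 i) T

/-- `d0` is almost-sure weakly synchronizing in `T`. -/
def ASWeakly (M : MDP Q A) (d0 : Q → ℝ) (T : Set Q) : Prop :=
  ∃ σ, IsStrategy σ ∧ ∀ ε > (0 : ℝ), {i : ℕ | 1 - ε ≤ mass (M.stepDist σ d0 i) T}.Infinite

/-- `d0` is almost-sure strongly synchronizing in `T`. -/
def ASStrongly (M : MDP Q A) (d0 : Q → ℝ) (T : Set Q) : Prop :=
  ∃ σ, IsStrategy σ ∧ ∀ ε > (0 : ℝ), ∃ N, ∀ i ≥ N, 1 - ε ≤ mass (M.stepDist σ d0 i) T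

/-- The uniform distribution on a set `S`. -/
noncomputable def uniformOn (S : Set Q) : Q → ℝ :=
  fun q => if q ∈ S then 1 / (S.ncard : ℝ) else 0

/-- The uniform strategy, playing all actions uniformly at random. -/
noncomputable def uniformStrategy (Q A : Type) [Fintype A] :
    List (Q × A) → Q → A → ℝ :=
  fun _ _ _ => 1 / (Fintype.card A : ℝ)

/-- Action `a` is allowed in `q` w.r.t. `S` if all its successors stay in `S`. -/
def Allowed (M : MDP Q A) (S : Set Q) (q : Q) (a : A) : Prop :=
  ∀ q', 0 < M.δ q a q' → q' ∈ S

/-- Edge relation within `S` given the allowed actions. -/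
def ECEdge (M : MDP Q A) (S : Set Q) (q q' : Q) : Prop :=
  q ∈ S ∧ q' ∈ S ∧ ∃ a, M.Allowed S q a ∧ 0 < M.δ q a q'

/-- `S` is an end-component: closed and strongly connected via allowed actions. -/
def IsEC (M : MDP Q A) (S : Set Q) : Prop :=
  (∀ q ∈ S, ∃ a, M.Allowed S q a) ∧
  ∀ q ∈ S, ∀ q' ∈ S, Relation.ReflTransGen (M.ECEdge S) q q'

/-- The union of all end-components. -/
def ECUnion (M : MDP Q A) : Set Q := ⋃₀ {S | M.IsEC S}

/-- Positive always synchronizing in `T`. -/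
def PosAlways (M : MDP Q A) (d0 : Q → ℝ) (T : Set Q) : Prop :=
  ∃ σ, IsStrategy σ ∧ ∀ i, 0 < mass (M.stepDist σ d0 i) T

/-- Positive eventually synchronizing in `T`. -/
def PosEvent (M : MDP Q A) (d0 : Q → ℝ) (T : Set Q) : Prop :=
  ∃ σ, IsStrategy σ ∧ ∃ i, 0 < mass (M.stepDist σ d0 i) T

/-- Positive weakly synchronizing in `T`. -/
def PosWeakly (M : MDP Q A) (d0 : Q → ℝ) (T : Set Q) : Prop :=
  ∃ σ, IsStrategy σ ∧ ∀ N, ∃ i ≥ N, 0 < mass (M.stepDist σ d0 i) T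

/-- Positive strongly synchronizing in `T`. -/
def PosStrongly (M : MDP Q A) (d0 : Q → ℝ) (T : Set Q) : Prop :=
  ∃ σ, IsStrategy σ ∧ ∃ N, ∀ i ≥ N, 0 < mass (M.stepDist σ d0 i) T

/-- Bounded always synchronizing in `T`. -/
def BndAlways (M : MDP Q A) (d0 : Q → ℝ) (T : Set Q) : Prop :=
  ∃ σ, IsStrategy σ ∧ ∃ ε > (0 : ℝ), ∀ i, ε < mass (M.stepDist σ d0 i) T

/-- Bounded eventually synchronizing in `T`. -/
def BndEvent (M : MDP Q A) (d0 : Q → ℝ) (T : Set Q) : Prop :=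
  ∃ σ, IsStrategy σ ∧ ∃ ε > (0 : ℝ), ∃ i, ε < mass (M.stepDist σ d0 i) T

/-- Bounded weakly synchronizing in `T`. -/
def BndWeakly (M : MDP Q A) (d0 : Q → ℝ) (T : Set Q) : Prop :=
  ∃ σ, IsStrategy σ ∧ ∃ ε > (0 : ℝ), ∀ N, ∃ i ≥ N, ε < mass (M.stepDist σ d0 i) T

/-- Bounded strongly synchronizing in `T`. -/
def BndStrongly (M : MDP Q A) (d0 : Q → ℝ) (T : Set Q) : Prop :=
  ∃ σ, IsStrategy σ ∧ ∃ ε > (0 : ℝ), ∃ N, ∀ i ≥ N, ε < mass (M.stepDist σ d0 i) T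

end MDP

/-!
Call a function on states subharmonic if, whatever the action, its expected value after one step is
at least its present value; its expectation then never decreases along a run, under any strategy.
Grow a set `C` of losing states, starting from the empty set: add a block of states outside `T` in
which every action either hits `C` with positive probability or surely stays in the enlarged set.
Each round costs at most one factor `α`, so `C` always carries a subharmonic function that lies
between `α ^ |C|` and `1` on `C` and vanishes elsewhere. Hence, once the initial distribution
charges a state of `C`, the probability of being outside `C`, and in particular that of being in
`T`, never exceeds `1 - α0 * α ^ |C|`.

If `C` cannot grow any further, then every distribution charging only the complement of `C` is
almost-sure winning: play uniformly among the actions that surely avoid `C`. The limiting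
probability of avoiding `T` is harmonic outside `T`, so by the maximum principle the states outside
`C` where it is maximal could be added to `C` if the maximum were positive.
-/

namespace MDP

section Distributions

variable {X : Type} [Fintype X] {d : X → ℝ} {g : X → ℝ} {m : ℝ}

lemma IsDist.le_sum_mul (hd : IsDist d) (hg : ∀ x, 0 < d x → m ≤ g x) : m ≤ ∑ x, d x * g x := by
  calc m = ∑ x, d x * m := by rw [← Finset.sum_mul, hd.2, one_mul]
    _ ≤ ∑ x, d x * g x := Finset.sum_le_sum fun x _ => by
        rcases (hd.1 x).eq_or_lt with hx | hx
        · simp only [← hx, zero_mul, le_refl]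
        · exact mul_le_mul_of_nonneg_left (hg x hx) hx.le

lemma IsDist.sum_mul_le (hd : IsDist d) (hg : ∀ x, 0 < d x → g x ≤ m) : ∑ x, d x * g x ≤ m := by
  have h := hd.le_sum_mul (g := -g) fun x hx => neg_le_neg (hg x hx)
  simp only [Pi.neg_apply, mul_neg, Finset.sum_neg_distrib] at h
  exact neg_le_neg_iff.1 h

lemma IsDist.eq_of_sum_mul_eq (hd : IsDist d) (hg : ∀ x, 0 < d x → g x ≤ m)
    (hsum : ∑ x, d x * g x = m) {x : X} (hx : 0 < d x) : g x = m := by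
  have hle : ∀ y ∈ Finset.univ, d y * g y ≤ d y * m := fun y _ => by
    rcases (hd.1 y).eq_or_lt with hy | hy
    · simp only [← hy, zero_mul, le_refl]
    · exact mul_le_mul_of_nonneg_left (hg y hy) hy.le
  have hsum' : ∑ y, d y * g y = ∑ y, d y * m := by rw [hsum, ← Finset.sum_mul, hd.2, one_mul]
  exact mul_left_cancel₀ hx.ne'
    ((Finset.sum_eq_sum_iff_of_le hle).1 hsum' x (Finset.mem_univ x))

lemma isDist_uniformOn {S : Set X} (hS : S.Nonempty) : IsDist (uniformOn S) := by
  have hcard : (S.ncard : ℝ) ≠ 0 := Nat.cast_ne_zero.2 (Set.ncard_ne_zero_of_mem hS.some_mem)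
  refine ⟨fun x => ?_, ?_⟩
  · unfold uniformOn
    split_ifs <;> positivity
  · simp only [uniformOn, ← Finset.sum_filter, Finset.sum_const, nsmul_eq_mul]
    rw [← Set.ncard_coe_finset, Finset.coe_filter_univ, Set.ofPred_mem_eq,
      mul_one_div_cancel hcard]

lemma IsStrategy.isDist {Q : Type} {σ : List (Q × X) → Q → X → ℝ} (hσ : IsStrategy σ)
    (h : List (Q × X)) (q : Q) : IsDist (σ h q) :=
  ⟨hσ.1 h q, hσ.2 h q⟩

lemma isStrategy_memoryless {Q : Type} {s : Q → X → ℝ} (hs : ∀ q, IsDist (s q)) :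
    IsStrategy fun _ : List (Q × X) => s :=
  ⟨fun _ q => (hs q).1, fun _ q => (hs q).2⟩

end Distributions

lemma uniformOn_pos_iff {X : Type} [Finite X] {S : Set X} {x : X} : 0 < uniformOn S x ↔ x ∈ S := by
  unfold uniformOn
  split_ifs with hx
  · have : 0 < S.ncard := Nat.pos_of_ne_zero (Set.ncard_ne_zero_of_mem hx)
    exact iff_of_true (by positivity) hx
  · exact iff_of_false (lt_irrefl 0) hx

variable {Q A : Type} [Fintype Q] [Fintype A] {M : MDP Q A} {σ : List (Q × A) → Q → A → ℝ}
  {d0 : Q → ℝ} {T : Set Q}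

lemma isDist_δ (M : MDP Q A) (q : Q) (a : A) : IsDist (M.δ q a) := ⟨M.δ_nonneg q a, M.δ_sum q a⟩

section PathExpectation

/-- The history of the finite path `qs` with actions `as`, in the form that strategies read: all
state-action pairs before the last state. -/
def history {i : ℕ} (qs : Fin (i + 1) → Q) (as : Fin i → A) : List (Q × A) :=
  List.ofFn fun k => (qs k.castSucc, as k)

/-- The expectation of `F` applied to the first `i + 1` states of a run under the strategy `σ` from
the initial distribution `d0`. -/
noncomputable def pathExp (M : MDP Q A) (σ : List (Q × A) → Q → A → ℝ) (d0 : Q → ℝ) {i : ℕ}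
    (F : (Fin (i + 1) → Q) → ℝ) : ℝ :=
  ∑ qs, ∑ as, M.pathProb σ d0 i qs as * F qs

lemma pathProb_nonneg (hσ : IsStrategy σ) (hd0 : 0 ≤ d0) {i : ℕ} (qs : Fin (i + 1) → Q)
    (as : Fin i → A) : 0 ≤ M.pathProb σ d0 i qs as :=
  mul_nonneg (hd0 _) (Finset.prod_nonneg fun _ _ => mul_nonneg (hσ.1 _ _ _) (M.δ_nonneg _ _ _))

lemma pathProb_snoc {i : ℕ} (qs : Fin (i + 1) → Q) (as : Fin i → A) (q' : Q) (a : A) :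
    M.pathProb σ d0 (i + 1) (Fin.snoc (α := fun _ => Q) qs q') (Fin.snoc (α := fun _ => A) as a) =
      M.pathProb σ d0 i qs as *
        (σ (history qs as) (qs (Fin.last i)) a * M.δ (qs (Fin.last i)) a q') := by
  have hprefix (j : Fin (i + 1)) :
      (List.ofFn fun k : Fin j.val =>
        ((Fin.snoc qs q' : Fin (i + 2) → Q) ⟨k, (k.isLt.trans j.isLt).trans (Nat.lt_succ_self _)⟩,
          (Fin.snoc as a : Fin (i + 1) → A) ⟨k, k.isLt.trans j.isLt⟩)) =
      List.ofFn fun k : Fin j.val =>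
        (qs ⟨k, k.isLt.trans j.isLt⟩, as ⟨k, k.isLt.trans_le j.is_le⟩) :=
    congrArg List.ofFn <| funext fun k => Prod.ext
      (Fin.snoc_castSucc (α := fun _ => Q) q' qs ⟨k, k.isLt.trans j.isLt⟩)
      (Fin.snoc_castSucc (α := fun _ => A) a as ⟨k, k.isLt.trans_le j.is_le⟩)
  simp only [pathProb, Fin.prod_univ_castSucc, hprefix]
  simp only [← Fin.castSucc_zero, Fin.succ_castSucc, Fin.succ_last, Fin.snoc_castSucc,
    Fin.snoc_last, ← mul_assoc]
  rfl

lemma sum_snoc {X R : Type*} [Fintype X] [AddCommMonoid R] {i : ℕ} (F : (Fin (i + 1) → X) → R) :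
    ∑ f, F f = ∑ f : Fin i → X, ∑ x, F (Fin.snoc (α := fun _ => X) f x) := by
  rw [← (Fin.snocEquiv fun _ => X).sum_comp, Fintype.sum_prod_type_right]
  rfl

lemma pathExp_zero (F : (Fin 1 → Q) → ℝ) : M.pathExp σ d0 F = ∑ q, d0 q * F fun _ => q := by
  unfold pathExp
  rw [← (Equiv.funUnique (Fin 1) Q).symm.sum_comp]
  refine Finset.sum_congr rfl fun q _ => ?_
  simp only [pathProb, Fintype.sum_unique, Finset.univ_eq_empty, Finset.prod_empty, mul_one]
  rfl

lemma pathExp_succ {i : ℕ} (F : (Fin (i + 2) → Q) → ℝ) :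
    M.pathExp σ d0 F = ∑ qs : Fin (i + 1) → Q, ∑ as : Fin i → A, M.pathProb σ d0 i qs as *
      ∑ a, σ (history qs as) (qs (Fin.last i)) a *
        ∑ q', M.δ (qs (Fin.last i)) a q' * F (Fin.snoc (α := fun _ => Q) qs q') := by
  unfold pathExp
  rw [sum_snoc]
  refine Finset.sum_congr rfl fun qs _ => ?_
  simp only [sum_snoc (X := A)]
  rw [Finset.sum_comm]
  refine Finset.sum_congr rfl fun as _ => ?_
  rw [Finset.sum_comm]
  simp only [pathProb_snoc, Finset.mul_sum, mul_assoc]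

lemma pathExp_one (hσ : IsStrategy σ) (hd0 : IsDist d0) {i : ℕ} :
    M.pathExp σ d0 (fun _ : Fin (i + 1) → Q => 1) = 1 := by
  induction i with
  | zero => simp only [pathExp_zero, mul_one, hd0.2]
  | succ i ih =>
    rw [pathExp_succ]
    simpa only [pathExp, mul_one, M.δ_sum, hσ.2] using ih

lemma pathExp_one_sub (hσ : IsStrategy σ) (hd0 : IsDist d0) {i : ℕ} (F : (Fin (i + 1) → Q) → ℝ) :
    M.pathExp σ d0 (fun qs => 1 - F qs) = 1 - M.pathExp σ d0 F := by
  calc M.pathExp σ d0 (fun qs => 1 - F qs)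
      = M.pathExp σ d0 (fun _ : Fin (i + 1) → Q => 1) - M.pathExp σ d0 F := by
        simp only [pathExp, mul_sub, Finset.sum_sub_distrib]
    _ = 1 - M.pathExp σ d0 F := by rw [pathExp_one hσ hd0]

lemma pathExp_mono (hσ : IsStrategy σ) (hd0 : 0 ≤ d0) {i : ℕ} {F G : (Fin (i + 1) → Q) → ℝ}
    (hFG : F ≤ G) : M.pathExp σ d0 F ≤ M.pathExp σ d0 G :=
  Finset.sum_le_sum fun qs _ => Finset.sum_le_sum fun as _ =>
    mul_le_mul_of_nonneg_left (hFG qs) (pathProb_nonneg hσ hd0 qs as)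

lemma mass_stepDist_eq_pathExp (i : ℕ) :
    mass (M.stepDist σ d0 i) T = M.pathExp σ d0 fun qs => T.indicator 1 (qs (Fin.last i)) := by
  calc mass (M.stepDist σ d0 i) T
      = ∑ q, ∑ qs : Fin (i + 1) → Q, ∑ as : Fin i → A,
          if qs (Fin.last i) = q then M.pathProb σ d0 i qs as * T.indicator 1 q else 0 := by
        refine Finset.sum_congr rfl fun q _ => ?_
        by_cases hq : q ∈ T
        · simp [stepDist, hq]
        · simp [hq]
    _ = M.pathExp σ d0 fun qs => T.indicator 1 (qs (Fin.last i)) := by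
        rw [Finset.sum_comm]
        refine Finset.sum_congr rfl fun qs _ => ?_
        rw [Finset.sum_comm]
        simp only [Finset.sum_ite_eq, Finset.mem_univ, if_true]

lemma reachProb_eq_pathExp (i : ℕ) :
    M.reachProb σ d0 T i =
      M.pathExp σ d0 fun qs : Fin (i + 1) → Q => 1 - if ∀ j, qs j ∉ T then 1 else 0 := by
  unfold reachProb pathExp
  refine Finset.sum_congr rfl fun qs _ => Finset.sum_congr rfl fun as _ => ?_
  by_cases h : ∃ j, qs j ∈ T
  · simp only [if_pos h, if_neg (fun hj : ∀ j, qs j ∉ T => h.elim hj), sub_zero, mul_one]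
  · simp only [if_neg h, if_pos (not_exists.1 h), sub_self, mul_zero]

end PathExpectation

section Subharmonic

variable {v : Q → ℝ}

/-- Subharmonic functions on the states: whatever the action, the expected value after one step is
at least the present value. Under every strategy they turn runs into submartingales. -/
def Subharmonic (M : MDP Q A) (v : Q → ℝ) : Prop := ∀ q a, v q ≤ ∑ q', M.δ q a q' * v q'

lemma Subharmonic.sum_mul_le_pathExp (hv : M.Subharmonic v) (hσ : IsStrategy σ) (hd0 : 0 ≤ d0)
    (i : ℕ) : ∑ q, d0 q * v q ≤ M.pathExp σ d0 fun qs => v (qs (Fin.last i)) := by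
  induction i with
  | zero => rw [pathExp_zero]
  | succ i ih =>
    refine ih.trans ?_
    rw [pathExp_succ]
    refine Finset.sum_le_sum fun qs _ => Finset.sum_le_sum fun as _ =>
      mul_le_mul_of_nonneg_left ?_ (pathProb_nonneg hσ hd0 qs as)
    simp only [Fin.snoc_last]
    exact (hσ.isDist _ _).le_sum_mul fun a _ => hv _ a

lemma Subharmonic.mass_stepDist_le (hv : M.Subharmonic v) (hσ : IsStrategy σ) (hd0 : IsDist d0)
    (hle : ∀ q, v q ≤ 1) (hT : ∀ q ∈ T, v q ≤ 0) (i : ℕ) :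
    mass (M.stepDist σ d0 i) T ≤ 1 - ∑ q, d0 q * v q := by
  have hind : ∀ q, T.indicator 1 q ≤ 1 - v q := fun q => by
    by_cases hq : q ∈ T
    · simpa [hq] using hT q hq
    · simpa [hq] using hle q
  calc mass (M.stepDist σ d0 i) T
      = M.pathExp σ d0 fun qs => T.indicator 1 (qs (Fin.last i)) := mass_stepDist_eq_pathExp i
    _ ≤ M.pathExp σ d0 fun qs => 1 - v (qs (Fin.last i)) :=
        pathExp_mono hσ hd0.1 fun qs => hind _
    _ = 1 - M.pathExp σ d0 fun qs => v (qs (Fin.last i)) := pathExp_one_sub hσ hd0 _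
    _ ≤ 1 - ∑ q, d0 q * v q := sub_le_sub_left (hv.sum_mul_le_pathExp hσ hd0.1 i) 1

end Subharmonic

section LosingStates

variable {C D : Set Q} {α : ℝ} {v : Q → ℝ}

/-- The set `D` strictly extends `C`, and from the added states every action that surely avoids `C`
surely stays in `D`. If `D` is disjoint from `T` and all states of `C` are losing for the objective
`◇T`, then so are all states of `D`. -/
def IsLosingExtension (M : MDP Q A) (C D : Set Q) : Prop :=
  C ⊂ D ∧ ∀ q ∈ D \ C, ∀ a, M.Allowed Cᶜ q a → M.Allowed D q a

/-- A subharmonic function supported on `C` and bounded below there by a power of `α`. Its value at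
a state is a lower bound, valid under every strategy, for the probability of staying in `C`
forever. -/
structure IsLosingCertificate (M : MDP Q A) (α : ℝ) (C : Set Q) (v : Q → ℝ) : Prop where
  subharmonic : M.Subharmonic v
  le_one : ∀ q, v q ≤ 1
  eq_zero : ∀ q ∉ C, v q = 0
  pow_le : ∀ q ∈ C, α ^ C.ncard ≤ v q

lemma isLosingCertificate_empty (M : MDP Q A) (α : ℝ) : M.IsLosingCertificate α ∅ 0 where
  subharmonic q a := by simp
  le_one _ := zero_le_one
  eq_zero _ _ := rfl
  pow_le _ hq := hq.elim

lemma IsLosingCertificate.nonneg (hv : M.IsLosingCertificate α C v) (hα : 0 ≤ α) (q : Q) :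
    0 ≤ v q := by
  by_cases hq : q ∈ C
  · exact (pow_nonneg hα _).trans (hv.pow_le q hq)
  · exact (hv.eq_zero q hq).ge

lemma IsLosingExtension.pow_succ_le_sum_mul (hCD : M.IsLosingExtension C D) (hα : 0 ≤ α)
    (hδ : ∀ q a q', 0 < M.δ q a q' → α ≤ M.δ q a q') {k : ℕ} (hv0 : ∀ q, 0 ≤ v q)
    (hC : ∀ q ∈ C, α ^ k ≤ v q) (hD : ∀ q ∈ D, α ^ (k + 1) ≤ v q) {q : Q} (hq : q ∈ D \ C)
    (a : A) : α ^ (k + 1) ≤ ∑ q', M.δ q a q' * v q' := by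
  by_cases ha : M.Allowed Cᶜ q a
  · exact (M.isDist_δ q a).le_sum_mul fun q' hq' => hD q' (hCD.2 q hq a ha q' hq')
  · obtain ⟨q₁, hq₁, hq₁C⟩ : ∃ q₁, 0 < M.δ q a q₁ ∧ q₁ ∈ C := by
      simpa [Allowed] using ha
    calc α ^ (k + 1) = α * α ^ k := pow_succ' α k
      _ ≤ M.δ q a q₁ * v q₁ :=
          mul_le_mul (hδ q a q₁ hq₁) (hC q₁ hq₁C) (pow_nonneg hα k) hq₁.le
      _ ≤ ∑ q', M.δ q a q' * v q' := Finset.single_le_sum (f := fun q' => M.δ q a q' * v q')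
          (fun q' _ => mul_nonneg (M.δ_nonneg q a q') (hv0 q')) (Finset.mem_univ q₁)

lemma IsLosingCertificate.extend (hv : M.IsLosingCertificate α C v) (hα : 0 ≤ α) (hα1 : α ≤ 1)
    (hδ : ∀ q a q', 0 < M.δ q a q' → α ≤ M.δ q a q') (hCD : M.IsLosingExtension C D) :
    M.IsLosingCertificate α D fun q => if q ∈ D \ C then α ^ (C.ncard + 1) else v q := by
  set w : Q → ℝ := fun q => if q ∈ D \ C then α ^ (C.ncard + 1) else v q
  have hw_of_mem {q : Q} (hq : q ∈ D \ C) : w q = α ^ (C.ncard + 1) := if_pos hq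
  have hw_of_notMem {q : Q} (hq : q ∉ D \ C) : w q = v q := if_neg hq
  have hvw : ∀ q, v q ≤ w q := fun q => by
    by_cases hq : q ∈ D \ C
    · rw [hw_of_mem hq, hv.eq_zero q hq.2]
      positivity
    · exact (hw_of_notMem hq).ge
  have hw0 : ∀ q, 0 ≤ w q := fun q => (hv.nonneg hα q).trans (hvw q)
  have hpow_le_w : ∀ q ∈ D, α ^ (C.ncard + 1) ≤ w q := fun q hq => by
    by_cases hqC : q ∈ C
    · exact (pow_le_pow_of_le_one hα hα1 (Nat.le_succ _)).trans ((hv.pow_le q hqC).trans (hvw q))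
    · exact (hw_of_mem ⟨hq, hqC⟩).ge
  refine ⟨fun q a => ?_, fun q => ?_, fun q hq => ?_, fun q hq => ?_⟩
  · by_cases hq : q ∈ D \ C
    · rw [hw_of_mem hq]
      exact hCD.pow_succ_le_sum_mul hα hδ hw0 (fun q' hq' => (hv.pow_le q' hq').trans (hvw q'))
        hpow_le_w hq a
    · calc w q = v q := hw_of_notMem hq
        _ ≤ ∑ q', M.δ q a q' * v q' := hv.subharmonic q a
        _ ≤ ∑ q', M.δ q a q' * w q' := Finset.sum_le_sum fun q' _ =>
            mul_le_mul_of_nonneg_left (hvw q') (M.δ_nonneg q a q')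
  · by_cases hq : q ∈ D \ C
    · exact (hw_of_mem hq).trans_le (pow_le_one₀ hα hα1)
    · exact (hw_of_notMem hq).trans_le (hv.le_one q)
  · rw [hw_of_notMem fun h => hq h.1, hv.eq_zero q fun h => hq (hCD.1.subset h)]
  · exact (pow_le_pow_of_le_one hα hα1 (Set.ncard_lt_ncard hCD.1)).trans (hpow_le_w q hq)

lemma exists_isLosingCertificate_maximal (M : MDP Q A) (T : Set Q) (hα : 0 ≤ α) (hα1 : α ≤ 1)
    (hδ : ∀ q a q', 0 < M.δ q a q' → α ≤ M.δ q a q') :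
    ∃ C v, Disjoint C T ∧ M.IsLosingCertificate α C v ∧
      ∀ D, Disjoint D T → ¬ M.IsLosingExtension C D := by
  obtain ⟨C, ⟨hCT, v, hv⟩, hmax⟩ :=
    (Set.toFinite {C : Set Q | Disjoint C T ∧ ∃ v, M.IsLosingCertificate α C v}).exists_maximal
      ⟨∅, Set.empty_disjoint T, 0, M.isLosingCertificate_empty α⟩
  exact ⟨C, v, hCT, hv, fun D hDT hCD =>
    hCD.1.not_subset (hmax ⟨hDT, _, hv.extend hα hα1 hδ hCD⟩ hCD.1.subset)⟩

end LosingStates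

section MemorylessStrategies

variable {s : Q → A → ℝ}

/-- The one-step operator of the memoryless strategy `s`, killed on `T`: its `i`-th iterate maps the
indicator of the complement of `T` to the probability of avoiding `T` during the first `i` steps. -/
noncomputable def killedStep (M : MDP Q A) (s : Q → A → ℝ) (T : Set Q) (g : Q → ℝ) : Q → ℝ :=
  Tᶜ.indicator fun q => ∑ a, s q a * ∑ q', M.δ q a q' * g q'

lemma killedStep_of_mem {g : Q → ℝ} {q : Q} (hq : q ∈ T) : M.killedStep s T g q = 0 :=
  Set.indicator_of_notMem (Set.notMem_compl_iff.2 hq) _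

lemma killedStep_of_notMem {g : Q → ℝ} {q : Q} (hq : q ∉ T) :
    M.killedStep s T g q = ∑ a, s q a * ∑ q', M.δ q a q' * g q' :=
  Set.indicator_of_mem (Set.mem_compl hq) _

lemma pathExp_avoid_memoryless {g : Q → ℝ} (hg : ∀ q ∈ T, g q = 0) (i : ℕ) :
    (M.pathExp (fun _ => s) d0 fun qs => if ∀ j, qs j ∉ T then g (qs (Fin.last i)) else 0) =
      ∑ q, d0 q * (M.killedStep s T)^[i] g q := by
  induction i generalizing g with
  | zero =>
    rw [pathExp_zero]
    refine Finset.sum_congr rfl fun q _ => ?_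
    by_cases hq : q ∈ T
    · simp [hq, hg q hq]
    · simp [hq]
  | succ i ih =>
    rw [Function.iterate_succ_apply,
      ← ih fun _ => killedStep_of_mem, pathExp_succ]
    refine Finset.sum_congr rfl fun qs _ => Finset.sum_congr rfl fun as _ => ?_
    have hsnoc (q' : Q) :
        (if ∀ j, (Fin.snoc qs q' : Fin (i + 2) → Q) j ∉ T then g q' else 0) =
          if ∀ j, qs j ∉ T then g q' else 0 := by
      by_cases hq' : q' ∈ T
      · simp only [hg q' hq', ite_self]
      · simp only [Fin.forall_fin_succ', Fin.snoc_castSucc, Fin.snoc_last, hq', not_false_eq_true,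
          and_true]
    simp only [Fin.snoc_last, hsnoc]
    split_ifs with hqs
    · rw [killedStep_of_notMem (hqs _)]
    · simp only [mul_zero, Finset.sum_const_zero]

lemma reachProb_memoryless (hs : ∀ q, IsDist (s q)) (hd0 : IsDist d0) (i : ℕ) :
    M.reachProb (fun _ => s) d0 T i =
      1 - ∑ q, d0 q * (M.killedStep s T)^[i] (Tᶜ.indicator 1) q := by
  rw [reachProb_eq_pathExp, pathExp_one_sub (isStrategy_memoryless hs) hd0,
    ← pathExp_avoid_memoryless fun q hq => Set.indicator_of_notMem (Set.notMem_compl_iff.2 hq) _]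
  congr! 4 with qs havoid
  exact (Set.indicator_of_mem (havoid _) 1).symm

lemma killedStep_mono (hs : ∀ q, 0 ≤ s q) : Monotone (M.killedStep s T) := fun _ _ hg _ =>
  Set.indicator_le_indicator <| Finset.sum_le_sum fun a _ =>
    mul_le_mul_of_nonneg_left (Finset.sum_le_sum fun q' _ =>
      mul_le_mul_of_nonneg_left (hg q') (M.δ_nonneg _ a q')) (hs _ a)

lemma killedStep_zero : M.killedStep s T 0 = 0 := by
  simp only [killedStep, Pi.zero_apply, mul_zero, Finset.sum_const_zero, Set.indicator_zero]
  rfl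

lemma continuous_killedStep : Continuous (M.killedStep s T) := by
  refine continuous_pi fun q => ?_
  by_cases hq : q ∈ T
  · simpa only [killedStep_of_mem hq] using continuous_const
  · simp only [killedStep_of_notMem hq]
    fun_prop

lemma antitone_iterate_killedStep (hs : ∀ q, IsDist (s q)) :
    Antitone fun i => (M.killedStep s T)^[i] (Tᶜ.indicator 1) := by
  refine (killedStep_mono fun q => (hs q).1).antitone_iterate_of_map_le fun q => ?_
  exact Set.indicator_le_indicator <| (hs q).sum_mul_le fun a _ => (M.isDist_δ q a).sum_mul_le
    fun q' _ => Set.indicator_le_self' (fun _ _ => zero_le_one) q'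

lemma exists_tendsto_iterate_killedStep (M : MDP Q A) (T : Set Q) (hs : ∀ q, IsDist (s q)) :
    ∃ f, 0 ≤ f ∧ M.killedStep s T f = f ∧
      Tendsto (fun i => (M.killedStep s T)^[i] (Tᶜ.indicator 1)) atTop (nhds f) := by
  have hnonneg : ∀ i, 0 ≤ (M.killedStep s T)^[i] (Tᶜ.indicator 1) := fun i =>
    calc 0 = (M.killedStep s T)^[i] 0 := (Function.iterate_fixed killedStep_zero i).symm
      _ ≤ (M.killedStep s T)^[i] (Tᶜ.indicator 1) :=
        (killedStep_mono fun q => (hs q).1).iterate i (Set.indicator_nonneg fun _ _ => zero_le_one)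
  have hlim := tendsto_atTop_ciInf (antitone_iterate_killedStep (M := M) (T := T) hs)
    ⟨0, Set.forall_mem_range.2 hnonneg⟩
  exact ⟨_, ge_of_tendsto' hlim hnonneg,
    isFixedPt_of_tendsto_iterate hlim continuous_killedStep.continuousAt, hlim⟩

lemma asReach_of_tendsto_iterate_killedStep {f : Q → ℝ} (hs : ∀ q, IsDist (s q))
    (hd0 : IsDist d0)
    (hf : Tendsto (fun i => (M.killedStep s T)^[i] (Tᶜ.indicator 1)) atTop (nhds f))
    (hf0 : ∀ q, 0 < d0 q → f q = 0) : M.ASReach d0 T := by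
  have hmono : Monotone (M.reachProb (fun _ => s) d0 T) := fun i j hij => by
    simp only [reachProb_memoryless hs hd0]
    exact sub_le_sub_left (Finset.sum_le_sum fun q _ => mul_le_mul_of_nonneg_left
      (antitone_iterate_killedStep hs hij q) (hd0.1 q)) 1
  have hlim : Tendsto (M.reachProb (fun _ => s) d0 T) atTop (nhds (1 - ∑ q, d0 q * f q)) := by
    rw [funext (reachProb_memoryless hs hd0)]
    exact (tendsto_finsetSum _ fun q _ => (tendsto_pi_nhds.1 hf q).const_mul (d0 q)).const_sub 1
  have hsum : ∑ q, d0 q * f q = 0 := Finset.sum_eq_zero fun q _ => by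
    rcases (hd0.1 q).eq_or_lt with hq | hq
    · rw [← hq, zero_mul]
    · rw [hf0 q hq, mul_zero]
  rw [hsum, sub_zero] at hlim
  exact ⟨_, isStrategy_memoryless hs, (isLUB_of_tendsto_atTop hmono hlim).ciSup_eq⟩

end MemorylessStrategies

section WinningStates

variable {C : Set Q} {s : Q → A → ℝ} {f : Q → ℝ}

lemma exists_isDist_pos_iff_allowed [Nonempty A] (M : MDP Q A) (S : Set Q) :
    ∃ s : Q → A → ℝ, (∀ q, IsDist (s q)) ∧
      ∀ q, (∃ a, M.Allowed S q a) → ∀ a, 0 < s q a ↔ M.Allowed S q a := by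
  refine ⟨fun q => uniformOn {a | (∃ b, M.Allowed S q b) → M.Allowed S q a},
    fun q => isDist_uniformOn ?_, fun q hq a => ?_⟩
  · by_cases hq : ∃ b, M.Allowed S q b
    · exact hq.imp fun a ha _ => ha
    · exact ⟨Classical.arbitrary A, fun hq' => absurd hq' hq⟩
  · simp only [uniformOn_pos_iff, Set.mem_ofPred_eq, hq, true_imp_iff]

lemma allowed_of_killedStep_eq_max {W : Set Q} {m : ℝ} (hs : ∀ q, IsDist (s q))
    (hfix : M.killedStep s T f = f) (hmax : ∀ q ∈ W, f q ≤ m) {q : Q} (hqT : q ∉ T)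
    (hq : f q = m) (hsafe : ∀ a, 0 < s q a → M.Allowed W q a) {a : A} (ha : 0 < s q a) :
    M.Allowed {q' | f q' = m} q a := by
  have hharm : ∑ a, s q a * ∑ q', M.δ q a q' * f q' = m := by
    rw [← hq]
    exact (killedStep_of_notMem hqT).symm.trans (congrFun hfix q)
  have hle : ∀ b, 0 < s q b → ∀ q', 0 < M.δ q b q' → f q' ≤ m := fun b hb q' hq' =>
    hmax q' (hsafe b hb q' hq')
  have hδ : ∑ q', M.δ q a q' * f q' = m := (hs q).eq_of_sum_mul_eq
    (fun b hb => (M.isDist_δ q b).sum_mul_le (hle b hb)) hharm ha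
  exact fun q' hq' => (M.isDist_δ q a).eq_of_sum_mul_eq (hle a ha) hδ hq'

lemma eq_zero_of_forall_not_isLosingExtension (hCT : Disjoint C T)
    (hC : ∀ D, Disjoint D T → ¬ M.IsLosingExtension C D) (hs : ∀ q, IsDist (s q))
    (hsafe : ∀ q, (∃ a, M.Allowed Cᶜ q a) → ∀ a, 0 < s q a ↔ M.Allowed Cᶜ q a)
    (hf : 0 ≤ f) (hfix : M.killedStep s T f = f) {q : Q} (hq : q ∉ C) : f q = 0 := by
  obtain ⟨p, hpC, hpmax⟩ := Set.exists_max_image Cᶜ f (Set.toFinite _) ⟨q, hq⟩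
  suffices hp : f p ≤ 0 from le_antisymm ((hpmax q hq).trans hp) (hf q)
  by_contra! hp
  have hfT : ∀ q ∈ T, f q = 0 := fun q hqT =>
    (congrFun hfix q).symm.trans (killedStep_of_mem hqT)
  have hT_of_eq {q : Q} (hq : f q = f p) : q ∉ T := fun hqT => hp.ne' (hq ▸ hfT q hqT)
  refine hC (C ∪ {q | f q = f p}) (Set.disjoint_union_left.2 ⟨hCT, ?_⟩) ⟨?_, ?_⟩
  · exact Set.disjoint_left.2 fun _ => hT_of_eq
  · exact Set.ssubset_union_left_iff.2 fun h => hpC (h (rfl : f p = f p))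
  · rintro q ⟨hqC | hqp, hqC'⟩ a ha
    · exact absurd hqC hqC'
    · have hsafe_q := hsafe q ⟨a, ha⟩
      have hstay := allowed_of_killedStep_eq_max hs hfix hpmax (hT_of_eq hqp) hqp
        (fun b => (hsafe_q b).1) ((hsafe_q a).2 ha)
      exact fun q' hq' => Or.inr (hstay q' hq')

lemma asReach_of_forall_not_isLosingExtension [Nonempty A] (hCT : Disjoint C T)
    (hC : ∀ D, Disjoint D T → ¬ M.IsLosingExtension C D) (hd0 : IsDist d0)
    (hd0C : ∀ q ∈ C, d0 q = 0) : M.ASReach d0 T := by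
  obtain ⟨s, hs, hsafe⟩ := M.exists_isDist_pos_iff_allowed Cᶜ
  obtain ⟨f, hf, hfix, hlim⟩ := M.exists_tendsto_iterate_killedStep T hs
  exact asReach_of_tendsto_iterate_killedStep hs hd0 hlim fun q hq =>
    eq_zero_of_forall_not_isLosingExtension hCT hC hs hsafe hf hfix fun hqC =>
      hq.ne' (hd0C q hqC)

end WinningStates

end MDP

open MDP in
/-- If `d0` is not almost-sure winning for reaching `T`, then under every strategy,
at every step, the probability of being in `T` is at most `1 - α0 * α ^ n`. -/
theorem stmt0 {Q A : Type} [Fintype Q] [Fintype A] (M : MDP Q A)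
    (d0 : Q → ℝ) (hd0 : IsDist d0) (T : Set Q) (α α0 : ℝ)
    (hα : IsLeast {x : ℝ | 0 < x ∧ ∃ q a q', M.δ q a q' = x} α)
    (hα0 : IsLeast {x : ℝ | 0 < x ∧ ∃ q, d0 q = x} α0)
    (h : ¬ M.ASReach d0 T) :
    ∀ σ, IsStrategy σ → ∀ i : ℕ,
      mass (M.stepDist σ d0 i) T ≤ 1 - α0 * α ^ Fintype.card Q := by
  intro σ hσ i
  obtain ⟨⟨hαpos, q₁, a₁, q₂, hα_eq⟩, hα_le⟩ := hα
  have : Nonempty A := ⟨a₁⟩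
  have hα1 : α ≤ 1 := hα_eq ▸ M.δ_sum q₁ a₁ ▸
    Finset.single_le_sum (fun q _ => M.δ_nonneg q₁ a₁ q) (Finset.mem_univ q₂)
  obtain ⟨C, v, hCT, hv, hmax⟩ := M.exists_isLosingCertificate_maximal T hαpos.le hα1
    fun q a q' hδ => hα_le ⟨hδ, q, a, q', rfl⟩
  obtain ⟨q, hqC, hq⟩ : ∃ q ∈ C, d0 q ≠ 0 := by
    by_contra! hd0C
    exact h (asReach_of_forall_not_isLosingExtension hCT hmax hd0 hd0C)
  have hq_pos : 0 < d0 q := (hd0.1 q).lt_of_ne' hq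
  have hC_card : C.ncard ≤ Fintype.card Q := Nat.card_eq_fintype_card (α := Q) ▸ C.ncard_le_card
  have hpow : α ^ Fintype.card Q ≤ v q :=
    (pow_le_pow_of_le_one hαpos.le hα1 hC_card).trans (hv.pow_le q hqC)
  calc mass (M.stepDist σ d0 i) T
      ≤ 1 - ∑ q, d0 q * v q := hv.subharmonic.mass_stepDist_le hσ hd0 hv.le_one
        (fun q hqT => (hv.eq_zero q fun hqC => hCT.notMem_of_mem_left hqC hqT).le) i
    _ ≤ 1 - d0 q * v q := sub_le_sub_left (Finset.single_le_sum (f := fun q => d0 q * v q)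
        (fun q _ => mul_nonneg (hd0.1 q) (hv.nonneg hαpos.le q)) (Finset.mem_univ q)) 1
    _ ≤ 1 - α0 * α ^ Fintype.card Q := sub_le_sub_left (mul_le_mul (hα0.2 ⟨hq_pos, q, rfl⟩) hpow
        (pow_nonneg hαpos.le _) hq_pos.le) 1
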